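/- For every finite reversible, irreducible, aperiodic Markov chain as above, β(G) ≤ Φ(G); that is, there exists a nonempty set S ⊆ G with π(S) ≤ 1/2 and a subset A ⊆ S with h_S(A) ≥ 1/2 and π(A)/π(S) ≤ Φ(G). -/

import Mathlib

open MeasureTheory Finset
open scoped ENNReal

namespace HM

variable {G : Type*} [Fintype G] [DecidableEq G]

/-- `P` is a stochastic (transition) matrix. -/
def IsStochastic (P : Matrix G G ℝ) : Prop :=
  (∀ x y, 0 ≤ P x y) ∧ ∀ x, ∑ y, P x y = 1

/-- Irreducibility: every state reaches every other state. -/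
def IsIrreducible (P : Matrix G G ℝ) : Prop :=
  ∀ x y : G, ∃ t : ℕ, 0 < (P ^ t) x y

/-- Aperiodicity: the gcd of return times is `1` at every state. -/
def IsAperiodic (P : Matrix G G ℝ) : Prop :=
  ∀ x : G, ∀ d : ℕ, (∀ t : ℕ, 0 < (P ^ t) x x → d ∣ t) → d = 1

/-- `P` is reversible with respect to the full-support probability vector `pi`. -/
def IsReversible (P : Matrix G G ℝ) (pi : G → ℝ) : Prop :=
  (∀ x, 0 < pi x) ∧ (∑ x, pi x = 1) ∧ ∀ x y, pi x * P x y = pi y * P y x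

variable [MeasurableSpace G]

/-- `μ x` is the law of the Markov chain with transition matrix `P` started at `x`:
all finite-dimensional (cylinder) probabilities are given by products of transition
probabilities. -/
def IsMarkovChain (P : Matrix G G ℝ) (μ : G → Measure (ℕ → G)) : Prop :=
  (∀ x, IsProbabilityMeasure (μ x)) ∧
  ∀ (x : G) (t : ℕ) (w : ℕ → G),
    μ x {ω | ∀ i ≤ t, ω i = w i} =
      ENNReal.ofReal ((if w 0 = x then 1 else 0) * ∏ i ∈ Finset.range t, P (w i) (w (i + 1)))

/-- Hitting time `T_S = inf {t ≥ 0 : X_t ∈ S}`, with value `⊤` if `S` is never hit. -/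
noncomputable def hit (S : Set G) (ω : ℕ → G) : ℕ∞ :=
  sInf ((↑) '' {n : ℕ | ω n ∈ S})

/-- Return time `T_S^+ = inf {t ≥ 1 : X_t ∈ S}`, with value `⊤` if `S` is never hit. -/
noncomputable def hitPlus (S : Set G) (ω : ℕ → G) : ℕ∞ :=
  sInf ((↑) '' {n : ℕ | 1 ≤ n ∧ ω n ∈ S})

/-- The event `X_{T_S} = x` (in particular `T_S < ∞`). -/
def hitsAt (S : Set G) (x : G) : Set (ℕ → G) :=
  {ω | ∃ n : ℕ, hit S ω = (n : ℕ∞) ∧ ω n = x}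

/-- Harmonic measure on `S` from `y`: `h_{y,S}(x) = Pr_y[X_{T_S} = x]`. -/
noncomputable def harm (μ : G → Measure (ℕ → G)) (S : Set G) (y x : G) : ℝ :=
  (μ y (hitsAt S x)).toReal

/-- Harmonic measure on `S` from the stationary distribution:
`h_S(x) = ∑_y π(y) h_{y,S}(x)`. -/
noncomputable def harmStat (pi : G → ℝ) (μ : G → Measure (ℕ → G)) (S : Set G) (x : G) : ℝ :=
  ∑ y, pi y * harm μ S y x

/-- `π(S) = ∑_{x ∈ S} π(x)`. -/
noncomputable def piOf (pi : G → ℝ) (S : Set G) : ℝ :=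
  ∑ x, S.indicator pi x

/-- `λ = max_{j > 1} |λ_j|`, via the variational characterization: the largest absolute
value of the quadratic form of `P` on the orthogonal complement of the constants in
`L²(π)`.  For a reversible chain this equals the largest absolute value of a
non-Perron eigenvalue of `P`. -/
noncomputable def lam (P : Matrix G G ℝ) (pi : G → ℝ) : ℝ :=
  sSup {r : ℝ | ∃ f : G → ℝ, ∑ x, pi x * f x = 0 ∧ ∑ x, pi x * f x ^ 2 = 1 ∧
    r = |∑ x, pi x * (f x * ∑ y, P x y * f y)|}

/-- `π_min = min_x π(x)`. -/
noncomputable def pimin (pi : G → ℝ) : ℝ := ⨅ x, pi x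

/-- `π_max = max_x π(x)`. -/
noncomputable def pimax (pi : G → ℝ) : ℝ := ⨆ x, pi x

/-- `u(P) = min_{x ≠ y} Pr_x[T_y < T_x^+]`. -/
noncomputable def uP (μ : G → Measure (ℕ → G)) : ℝ :=
  sInf {r : ℝ | ∃ x y : G, x ≠ y ∧
    r = (μ x {ω | hit {y} ω < hitPlus {x} ω}).toReal}

/-- `E_x[T_S^+]` (as an extended nonnegative real, then converted to `ℝ`). -/
noncomputable def expHitPlus (μ : G → Measure (ℕ → G)) (S : Set G) (x : G) : ℝ :=
  (∫⁻ ω, (hitPlus S ω : ℝ≥0∞) ∂ μ x).toReal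

/-- The number of distinct states visited strictly before the return time `T_S^+`,
i.e. `|{X_0, X_1, …, X_{T_S^+ − 1}}|`. -/
noncomputable def visited (S : Set G) (ω : ℕ → G) : ℕ :=
  Set.ncard {g : G | ∃ n : ℕ, (n : ℕ∞) < hitPlus S ω ∧ ω n = g}


/-- The inner boundary of `S`: states of `S` reachable in one step from outside `S`. -/
def innerBoundary (P : Matrix G G ℝ) (S : Set G) : Set G :=
  {x ∈ S | ∃ y, y ∉ S ∧ 0 < P y x}

/-- The Cheeger constant `Φ(G) = min_{0 < π(S) ≤ 1/2} π(∂S)/π(S)`. -/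
noncomputable def Phi (P : Matrix G G ℝ) (pi : G → ℝ) : ℝ :=
  sInf {r : ℝ | ∃ S : Set G, S.Nonempty ∧ piOf pi S ≤ 1 / 2 ∧
    r = piOf pi (innerBoundary P S) / piOf pi S}

/-- `β(G) = min_{0 < π(S) ≤ 1/2} min_{A ⊆ S, h_S(A) ≥ 1/2} π(A)/π(S)`. -/
noncomputable def beta (pi : G → ℝ) (μ : G → Measure (ℕ → G)) : ℝ :=
  sInf {r : ℝ | ∃ S : Set G, S.Nonempty ∧ piOf pi S ≤ 1 / 2 ∧
    ∃ A ⊆ S, 1 / 2 ≤ ∑ x, A.indicator (harmStat pi μ S) x ∧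
      r = piOf pi A / piOf pi S}


/-!
A chain started outside `S` can enter `S` only through `∂S`, so `h_{y,S}(∂S) = 1` for `y ∉ S` once
`S` is known to be hit almost surely. Averaging over `y` gives `h_S(∂S) ≥ π(Sᶜ) ≥ 1/2` whenever
`π(S) ≤ 1/2`, so `A = ∂S` is admissible in the definition of `β` for a set `S` attaining `Φ`.

Hitting is almost sure because the probabilities of avoiding `S` up to time `t` decrease to a limit
`q ≤ P q`, which is constant by the maximum principle and vanishes on `S`.
-/

open Filter Function Matrix
open scoped Topology

section Matrix

variable {m n R : Type*} [Fintype n] [Semiring R] [PartialOrder R] [IsOrderedRing R]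

theorem monotone_mulVec_of_nonneg {A : Matrix m n R} (hA : ∀ i j, 0 ≤ A i j) :
    Monotone (A *ᵥ ·) :=
  fun _ _ hfg i ↦ dotProduct_le_dotProduct_of_nonneg_left hfg (hA i)

theorem le_pow_mulVec [DecidableEq n] {A : Matrix n n R} (hA : ∀ i j, 0 ≤ A i j) {f : n → R}
    (hf : f ≤ A *ᵥ f) (t : ℕ) : f ≤ A ^ t *ᵥ f := by
  induction t with
  | zero => rw [pow_zero, one_mulVec]
  | succ t ih =>
    rw [pow_succ', ← mulVec_mulVec]
    exact hf.trans (monotone_mulVec_of_nonneg hA ih)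

end Matrix

section Irreducible

variable {V : Type*} [Fintype V] [DecidableEq V] {P : Matrix V V ℝ}

theorem IsStochastic.pow (hP : IsStochastic P) (t : ℕ) : IsStochastic (P ^ t) :=
  mem_rowStochastic_iff_sum.1 (pow_mem (mem_rowStochastic_iff_sum.2 hP) t)

/- Maximum principle: at a maximum `m` of `f`, the inequality `f m ≤ (P ^ t *ᵥ f) m` forces
`f z = f m` wherever `P ^ t` charges `z`. -/
theorem IsIrreducible.eq_of_le_mulVec (hirr : IsIrreducible P) (hP : IsStochastic P) {f : V → ℝ}
    (hf : f ≤ P *ᵥ f) (x y : V) : f x = f y := by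
  have : Nonempty V := ⟨x⟩
  obtain ⟨m, hm⟩ := Finite.exists_max f
  suffices hconst : ∀ z, f z = f m from (hconst x).trans (hconst y).symm
  intro z
  obtain ⟨t, ht⟩ := hirr m z
  have hgap_nonneg (w : V) : 0 ≤ (P ^ t) m w * (f m - f w) :=
    mul_nonneg ((hP.pow t).1 m w) (sub_nonneg.2 (hm w))
  have hgap_sum : ∑ w, (P ^ t) m w * (f m - f w) ≤ 0 := by
    simp_rw [mul_sub, sum_sub_distrib, ← sum_mul, (hP.pow t).2, one_mul]
    exact sub_nonpos.2 (le_pow_mulVec hP.1 hf t m)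
  have hgap : (P ^ t) m z * (f m - f z) ≤ 0 :=
    (single_le_sum (fun w _ ↦ hgap_nonneg w) (mem_univ z)).trans hgap_sum
  exact le_antisymm (hm z) (sub_nonpos.1 (nonpos_of_mul_nonpos_right hgap ht))

end Irreducible

section AvoidProb

variable {V : Type*} [Fintype V] {P : Matrix V V ℝ} {S : Set V}

/-- The probability that the chain with transition matrix `P` avoids `S` at all times `0, …, t`,
as a function of the starting state, encoded by its first-step recursion. -/
noncomputable def avoidProb (P : Matrix V V ℝ) (S : Set V) : ℕ → V → ℝ
  | 0 => Sᶜ.indicator 1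
  | t + 1 => Sᶜ.indicator (P *ᵥ avoidProb P S t)

theorem avoidProb_of_mem {x : V} (hx : x ∈ S) (t : ℕ) : avoidProb P S t x = 0 := by
  cases t <;> exact Set.indicator_of_notMem (Set.notMem_compl_iff.2 hx) _

theorem avoidProb_nonneg (hP : ∀ x y, 0 ≤ P x y) (t : ℕ) : 0 ≤ avoidProb P S t := by
  induction t with
  | zero => exact Set.indicator_nonneg fun _ _ ↦ zero_le_one
  | succ t ih =>
    exact Set.indicator_nonneg fun x _ ↦ dotProduct_nonneg_of_nonneg (hP x) ih

theorem avoidProb_succ_le_mulVec (hP : ∀ x y, 0 ≤ P x y) (t : ℕ) :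
    avoidProb P S (t + 1) ≤ P *ᵥ avoidProb P S t :=
  Set.indicator_le_self' fun x _ ↦ dotProduct_nonneg_of_nonneg (hP x) (avoidProb_nonneg hP t)

theorem antitone_avoidProb (hP : IsStochastic P) : Antitone (avoidProb P S) := by
  refine antitone_nat_of_succ_le fun t ↦ ?_
  induction t with
  | zero =>
    refine fun x ↦ Set.indicator_le_indicator' fun _ ↦ ?_
    calc (P *ᵥ Sᶜ.indicator 1) x ≤ (P *ᵥ 1) x :=
          monotone_mulVec_of_nonneg hP.1 (Set.indicator_le_self' fun _ _ ↦ zero_le_one) x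
      _ = 1 := (dotProduct_one _).trans (hP.2 x)
  | succ t ih =>
    exact fun x ↦ Set.indicator_le_indicator' fun _ ↦ monotone_mulVec_of_nonneg hP.1 ih x

theorem tendsto_avoidProb_zero [DecidableEq V] (hP : IsStochastic P) (hirr : IsIrreducible P)
    (hS : S.Nonempty) (x : V) : Tendsto (fun t ↦ avoidProb P S t x) atTop (𝓝 0) := by
  obtain ⟨q, hq⟩ : ∃ q, Tendsto (avoidProb P S) atTop (𝓝 q) :=
    ⟨_, tendsto_atTop_ciInf (antitone_avoidProb hP)
      ⟨0, Set.forall_mem_range.2 fun t ↦ avoidProb_nonneg hP.1 t⟩⟩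
  have hq_le : q ≤ P *ᵥ q :=
    le_of_tendsto_of_tendsto' ((tendsto_add_atTop_iff_nat 1).2 hq)
      (((continuous_const.matrix_mulVec continuous_id).tendsto q).comp hq)
      (avoidProb_succ_le_mulVec hP.1)
  obtain ⟨s, hs⟩ := hS
  have hqs : q s = 0 :=
    tendsto_nhds_unique (tendsto_pi_nhds.1 hq s)
      (by simp only [avoidProb_of_mem hs, tendsto_const_nhds])
  rw [← hqs, hirr.eq_of_le_mulVec hP hq_le s x]
  exact tendsto_pi_nhds.1 hq x

end AvoidProb

section Trajectory

variable {V : Type*} {P : Matrix V V ℝ} {S : Set V} {ω : ℕ → V}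

theorem hit_eq_of_isLeast {n : ℕ} (hn : IsLeast {k | ω k ∈ S} n) : hit S ω = n :=
  (Nat.mono_cast.map_isLeast hn).csInf_eq

theorem exists_mem_innerBoundary_hitsAt (h_start : ω 0 ∉ S) (h_hit : ∃ n, ω n ∈ S)
    (h_step : ∀ n, 0 < P (ω n) (ω (n + 1))) : ∃ x ∈ innerBoundary P S, ω ∈ hitsAt S x := by
  classical
  have h_least : IsLeast {k | ω k ∈ S} (Nat.find h_hit) := Nat.isLeast_find h_hit
  obtain ⟨k, hk⟩ : ∃ k, Nat.find h_hit = k + 1 :=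
    Nat.exists_eq_succ_of_ne_zero fun h ↦ h_start ((Nat.find_eq_zero h_hit).1 h)
  rw [hk] at h_least
  have h_before : ω k ∉ S := Nat.find_min h_hit (by omega)
  exact ⟨ω (k + 1), ⟨h_least.1, ω k, h_before, h_step k⟩, k + 1, hit_eq_of_isLeast h_least, rfl⟩

end Trajectory

section Cylinder

theorem cylinder_inter_avoid_eq_empty {V : Type*} {S : Set V} {w : ℕ → V} {k : ℕ} (hk : w k ∈ S)
    (t : ℕ) : PiNat.cylinder w (k + 1) ∩ {ω | ∀ j ≤ t, ω (k + j) ∉ S} = ∅ :=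
  Set.eq_empty_of_forall_notMem fun _ ⟨hw, h_avoid⟩ ↦
    h_avoid 0 t.zero_le (hw k k.lt_succ_self ▸ hk)

theorem cylinder_inter_avoid_subset_iUnion {V : Type*} (S : Set V) (w : ℕ → V) (k t : ℕ) :
    PiNat.cylinder w (k + 1) ∩ {ω | ∀ j ≤ t + 1, ω (k + j) ∉ S} ⊆
      ⋃ z, PiNat.cylinder (update w (k + 1) z) (k + 2) ∩ {ω | ∀ j ≤ t, ω (k + 1 + j) ∉ S} := by
  rw [← Set.iUnion_inter, PiNat.iUnion_cylinder_update w (k + 1)]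
  refine Set.inter_subset_inter_right _ fun ω h_avoid j hj ↦ ?_
  rw [add_assoc, add_comm 1 j]
  exact h_avoid (j + 1) (Nat.succ_le_succ hj)

/- For the discrete topologies on the factors, cylinders are open and the product is second
countable. -/
theorem measure_eq_zero_of_cylinder {E : ℕ → Type*} [∀ i, Countable (E i)]
    [∀ i, MeasurableSpace (E i)] {ν : Measure (∀ i, E i)} {B : Set (∀ i, E i)} (n : ℕ)
    (h : ∀ w ∈ B, ν (PiNat.cylinder w n) = 0) : ν B = 0 := by
  let _ (i : ℕ) : TopologicalSpace (E i) := ⊥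
  have _ (i : ℕ) : DiscreteTopology (E i) := ⟨rfl⟩
  refine measure_null_of_locally_null B fun w hw ↦ ⟨PiNat.cylinder w n, ?_, h w hw⟩
  exact mem_nhdsWithin_of_mem_nhds
    ((PiNat.isOpen_cylinder E w n).mem_nhds (PiNat.self_mem_cylinder w n))

end Cylinder

section MarkovChain

variable {V : Type*} [DecidableEq V] [MeasurableSpace V] {P : Matrix V V ℝ}
  {μ : V → Measure (ℕ → V)} {S : Set V}

namespace IsMarkovChain

theorem measure_cylinder (hμ : IsMarkovChain P μ) (x : V) (w : ℕ → V) (t : ℕ) :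
    μ x (PiNat.cylinder w (t + 1)) =
      ENNReal.ofReal ((if w 0 = x then 1 else 0) * ∏ i ∈ range t, P (w i) (w (i + 1))) := by
  simpa only [PiNat.cylinder, Nat.lt_succ_iff] using hμ.2 x t w

theorem measure_cylinder_succ (hμ : IsMarkovChain P μ) (hP : ∀ x y, 0 ≤ P x y) (x : V)
    (w : ℕ → V) (t : ℕ) :
    μ x (PiNat.cylinder w (t + 2)) =
      μ x (PiNat.cylinder w (t + 1)) * ENNReal.ofReal (P (w t) (w (t + 1))) := by
  rw [hμ.measure_cylinder, hμ.measure_cylinder, prod_range_succ, ← mul_assoc,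
    ENNReal.ofReal_mul' (hP _ _)]

theorem measure_cylinder_update (hμ : IsMarkovChain P μ) (hP : ∀ x y, 0 ≤ P x y) (x : V)
    (w : ℕ → V) (t : ℕ) (z : V) :
    μ x (PiNat.cylinder (update w (t + 1) z) (t + 2)) =
      μ x (PiNat.cylinder w (t + 1)) * ENNReal.ofReal (P (w t) z) := by
  rw [hμ.measure_cylinder_succ hP,
    PiNat.mem_cylinder_iff_eq.1 (PiNat.update_mem_cylinder w (t + 1) z), update_self,
    update_of_ne t.lt_succ_self.ne]

theorem ae_zero_eq [Countable V] (hμ : IsMarkovChain P μ) (x : V) : ∀ᵐ ω ∂μ x, ω 0 = x := by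
  refine measure_eq_zero_of_cylinder 1 fun w (hw : w 0 ≠ x) ↦ ?_
  rw [hμ.measure_cylinder, if_neg hw, zero_mul, ENNReal.ofReal_zero]

theorem ae_transition_pos [Countable V] (hμ : IsMarkovChain P μ) (hP : ∀ x y, 0 ≤ P x y) (x : V) :
    ∀ᵐ ω ∂μ x, ∀ n, 0 < P (ω n) (ω (n + 1)) := by
  refine ae_all_iff.2 fun n ↦
    measure_eq_zero_of_cylinder (n + 2) fun w (hw : ¬ 0 < P (w n) (w (n + 1))) ↦ ?_
  rw [hμ.measure_cylinder_succ hP, ENNReal.ofReal_of_nonpos (not_lt.1 hw), mul_zero]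

variable [Fintype V]

theorem measure_cylinder_inter_avoid_le (hμ : IsMarkovChain P μ) (hP : ∀ x y, 0 ≤ P x y) (x : V)
    (t k : ℕ) (w : ℕ → V) :
    μ x (PiNat.cylinder w (k + 1) ∩ {ω | ∀ j ≤ t, ω (k + j) ∉ S}) ≤
      μ x (PiNat.cylinder w (k + 1)) * ENNReal.ofReal (avoidProb P S t (w k)) := by
  induction t generalizing k w with
  | zero =>
    by_cases hk : w k ∈ S
    · simp only [cylinder_inter_avoid_eq_empty hk, measure_empty, zero_le]
    · have h_one : avoidProb P S 0 (w k) = 1 := Set.indicator_of_mem (s := Sᶜ) hk 1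
      rw [h_one, ENNReal.ofReal_one, mul_one]
      exact measure_mono Set.inter_subset_left
  | succ t ih =>
    by_cases hk : w k ∈ S
    · simp only [cylinder_inter_avoid_eq_empty hk, measure_empty, zero_le]
    calc μ x (PiNat.cylinder w (k + 1) ∩ {ω | ∀ j ≤ t + 1, ω (k + j) ∉ S})
        ≤ ∑ z, μ x (PiNat.cylinder (update w (k + 1) z) (k + 2) ∩
            {ω | ∀ j ≤ t, ω (k + 1 + j) ∉ S}) :=
          (measure_mono (cylinder_inter_avoid_subset_iUnion S w k t)).trans
            (measure_iUnion_fintype_le _ _)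
      _ ≤ ∑ z, μ x (PiNat.cylinder w (k + 1)) *
            (ENNReal.ofReal (P (w k) z) * ENNReal.ofReal (avoidProb P S t z)) := by
          refine sum_le_sum fun z _ ↦ (ih (k + 1) _).trans_eq ?_
          rw [hμ.measure_cylinder_update hP, update_self, mul_assoc]
      _ = μ x (PiNat.cylinder w (k + 1)) * ENNReal.ofReal (avoidProb P S (t + 1) (w k)) := by
          have h_succ : avoidProb P S (t + 1) (w k) = ∑ z, P (w k) z * avoidProb P S t z :=
            Set.indicator_of_mem (s := Sᶜ) hk _
          simp_rw [h_succ, ← mul_sum, ← ENNReal.ofReal_mul (hP _ _)]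
          rw [ENNReal.ofReal_sum_of_nonneg fun z _ ↦
            mul_nonneg (hP _ _) (avoidProb_nonneg hP t z)]

theorem measure_avoid_le (hμ : IsMarkovChain P μ) (hP : ∀ x y, 0 ≤ P x y) (x : V) (t : ℕ) :
    μ x {ω | ∀ j ≤ t, ω j ∉ S} ≤ ENNReal.ofReal (avoidProb P S t x) := by
  have := hμ.1 x
  calc μ x {ω | ∀ j ≤ t, ω j ∉ S}
      ≤ μ x (PiNat.cylinder (fun _ ↦ x) 1 ∩ {ω | ∀ j ≤ t, ω (0 + j) ∉ S}) := by
        refine measure_mono_ae ?_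
        filter_upwards [hμ.ae_zero_eq x] with ω h_start (h_avoid : ∀ j ≤ t, ω j ∉ S)
        exact ⟨fun i hi ↦ by rwa [Nat.lt_one_iff.1 hi], fun j hj ↦ by
          rw [zero_add]; exact h_avoid j hj⟩
    _ ≤ μ x (PiNat.cylinder (fun _ ↦ x) 1) * ENNReal.ofReal (avoidProb P S t x) :=
        hμ.measure_cylinder_inter_avoid_le hP x t 0 _
    _ ≤ ENNReal.ofReal (avoidProb P S t x) := mul_le_of_le_one_left' prob_le_one

theorem ae_exists_mem (hμ : IsMarkovChain P μ) (hP : IsStochastic P) (hirr : IsIrreducible P)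
    (hS : S.Nonempty) (x : V) : ∀ᵐ ω ∂μ x, ∃ n, ω n ∈ S := by
  have h_bound (t : ℕ) : μ x {ω | ¬ ∃ n, ω n ∈ S} ≤ ENNReal.ofReal (avoidProb P S t x) := by
    refine (measure_mono ?_).trans (hμ.measure_avoid_le hP.1 x t)
    exact fun ω h_never j _ hj ↦ h_never ⟨j, hj⟩
  have h_lim := ENNReal.tendsto_ofReal (tendsto_avoidProb_zero hP hirr hS x)
  rw [ENNReal.ofReal_zero] at h_lim
  exact nonpos_iff_eq_zero.1 (ge_of_tendsto' h_lim h_bound)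

theorem ae_exists_mem_innerBoundary_hitsAt (hμ : IsMarkovChain P μ) (hP : IsStochastic P)
    (hirr : IsIrreducible P) (hS : S.Nonempty) {y : V} (hy : y ∉ S) :
    ∀ᵐ ω ∂μ y, ∃ x ∈ innerBoundary P S, ω ∈ hitsAt S x := by
  filter_upwards [hμ.ae_zero_eq y, hμ.ae_exists_mem hP hirr hS y, hμ.ae_transition_pos hP.1 y]
    with ω h_start h_hit h_step
  exact exists_mem_innerBoundary_hitsAt (h_start ▸ hy) h_hit h_step

end IsMarkovChain

end MarkovChain

section HarmonicMeasure

variable {V : Type*} [Fintype V] [MeasurableSpace V] {μ : V → Measure (ℕ → V)} {S A : Set V}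
  {pi : V → ℝ}

theorem one_le_sum_indicator_harm {y : V} [IsProbabilityMeasure (μ y)]
    (h : ∀ᵐ ω ∂μ y, ∃ x ∈ A, ω ∈ hitsAt S x) : 1 ≤ ∑ x, A.indicator (harm μ S y) x := by
  classical
  have h_univ : (⋃ x ∈ ({x | x ∈ A} : Finset V), hitsAt S x) =ᵐ[μ y] Set.univ :=
    eventuallyEq_univ.2 <| h.mono fun ω ⟨x, hxA, hx⟩ ↦
      Set.mem_biUnion (mem_coe.2 (mem_filter.2 ⟨mem_univ x, hxA⟩)) hx
  calc 1 = (μ y).real (⋃ x ∈ ({x | x ∈ A} : Finset V), hitsAt S x) := by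
        rw [measureReal_congr h_univ, probReal_univ]
    _ ≤ ∑ x with x ∈ A, harm μ S y x := measureReal_biUnion_finset_le _ _
    _ = ∑ x, A.indicator (harm μ S y) x :=
        (sum_indicator_eq_sum_filter univ (fun _ ↦ harm μ S y) (fun _ ↦ A) id).symm

theorem sum_indicator_harm_nonneg (y : V) : 0 ≤ ∑ x, A.indicator (harm μ S y) x :=
  sum_nonneg fun x _ ↦ Set.indicator_nonneg (fun _ _ ↦ ENNReal.toReal_nonneg) x

theorem sum_indicator_harmStat :
    ∑ x, A.indicator (harmStat pi μ S) x = ∑ y, pi y * ∑ x, A.indicator (harm μ S y) x := by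
  simp_rw [mul_sum]
  rw [sum_comm]
  refine sum_congr rfl fun x _ ↦ ?_
  by_cases hx : x ∈ A <;> simp [hx, harmStat]

theorem piOf_compl_le_sum_indicator_harmStat [DecidableEq V] {P : Matrix V V ℝ}
    (hμ : IsMarkovChain P μ) (hP : IsStochastic P) (hirr : IsIrreducible P) (hS : S.Nonempty)
    (hpi : ∀ x, 0 ≤ pi x) :
    piOf pi Sᶜ ≤ ∑ x, (innerBoundary P S).indicator (harmStat pi μ S) x := by
  rw [sum_indicator_harmStat]
  refine sum_le_sum fun y _ ↦ Set.indicator_apply_le' (fun hy ↦ ?_) fun _ ↦ ?_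
  · have := hμ.1 y
    exact le_mul_of_one_le_right (hpi y)
      (one_le_sum_indicator_harm (hμ.ae_exists_mem_innerBoundary_hitsAt hP hirr hS hy))
  · exact mul_nonneg (hpi y) (sum_indicator_harm_nonneg y)

end HarmonicMeasure

section Cheeger

variable {V : Type*} [Fintype V] {pi : V → ℝ}

theorem piOf_nonneg (hpi : ∀ x, 0 ≤ pi x) (S : Set V) : 0 ≤ piOf pi S :=
  sum_nonneg fun x _ ↦ Set.indicator_nonneg (fun x _ ↦ hpi x) x

theorem piOf_add_piOf_compl (pi : V → ℝ) (S : Set V) : piOf pi S + piOf pi Sᶜ = ∑ x, pi x := by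
  simp_rw [piOf, ← sum_add_distrib, Set.indicator_self_add_compl_apply]

theorem exists_piOf_le_half [Nontrivial V] (hsum : ∑ x, pi x = 1) :
    ∃ S : Set V, S.Nonempty ∧ piOf pi S ≤ 1 / 2 := by
  obtain ⟨a, b, hab⟩ := exists_pair_ne V
  have h_add := piOf_add_piOf_compl pi {a}
  rcases le_total (piOf pi {a}) (1 / 2) with ha | ha
  · exact ⟨{a}, Set.singleton_nonempty a, ha⟩
  · exact ⟨{a}ᶜ, ⟨b, hab.symm⟩, by linarith⟩

theorem exists_Phi_eq [Nontrivial V] (P : Matrix V V ℝ) (hsum : ∑ x, pi x = 1) :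
    ∃ S : Set V, S.Nonempty ∧ piOf pi S ≤ 1 / 2 ∧
      Phi P pi = piOf pi (innerBoundary P S) / piOf pi S := by
  obtain ⟨S, hS, hS_half⟩ := exists_piOf_le_half hsum
  refine Set.Nonempty.csInf_mem (s := {r : ℝ | ∃ S : Set V, S.Nonempty ∧ piOf pi S ≤ 1 / 2 ∧
    r = piOf pi (innerBoundary P S) / piOf pi S}) ⟨_, S, hS, hS_half, rfl⟩ ?_
  refine (Set.finite_range fun S : Set V ↦ piOf pi (innerBoundary P S) / piOf pi S).subset ?_
  rintro _ ⟨S, -, -, rfl⟩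
  exact Set.mem_range_self S

theorem beta_le [MeasurableSpace V] {μ : V → Measure (ℕ → V)} (hpi : ∀ x, 0 ≤ pi x) {S A : Set V}
    (hS : S.Nonempty) (hS_half : piOf pi S ≤ 1 / 2) (hAS : A ⊆ S)
    (hA : 1 / 2 ≤ ∑ x, A.indicator (harmStat pi μ S) x) :
    beta pi μ ≤ piOf pi A / piOf pi S := by
  refine csInf_le ⟨0, ?_⟩ ⟨S, hS, hS_half, A, hAS, hA, rfl⟩
  rintro _ ⟨S, -, -, A, -, -, rfl⟩
  exact div_nonneg (piOf_nonneg hpi A) (piOf_nonneg hpi S)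

end Cheeger

theorem stmt15_general {V : Type*} [Fintype V] [DecidableEq V] [Nontrivial V] [MeasurableSpace V]
    {P : Matrix V V ℝ} {pi : V → ℝ} {μ : V → Measure (ℕ → V)} (hP : IsStochastic P)
    (hirr : IsIrreducible P) (hpos : ∀ x, 0 < pi x) (hsum : ∑ x, pi x = 1)
    (hμ : IsMarkovChain P μ) :
    beta pi μ ≤ Phi P pi ∧
      ∃ S : Set V, S.Nonempty ∧ piOf pi S ≤ 1 / 2 ∧
        ∃ A ⊆ S, 1 / 2 ≤ ∑ x, A.indicator (harmStat pi μ S) x ∧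
          piOf pi A / piOf pi S ≤ Phi P pi := by
  have hpi (x : V) : 0 ≤ pi x := (hpos x).le
  obtain ⟨S, hS, hS_half, hPhi⟩ := exists_Phi_eq P hsum
  have h_sub : innerBoundary P S ⊆ S := fun _ hx ↦ hx.1
  have h_harm : 1 / 2 ≤ ∑ x, (innerBoundary P S).indicator (harmStat pi μ S) x := by
    have h_compl := piOf_compl_le_sum_indicator_harmStat hμ hP hirr hS hpi
    linarith [piOf_add_piOf_compl pi S]
  exact ⟨hPhi ▸ beta_le hpi hS hS_half h_sub h_harm,
    S, hS, hS_half, innerBoundary P S, h_sub, h_harm, hPhi.ge⟩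

/-- `β(G) ≤ Φ(G)`: there is a nonempty `S` with `π(S) ≤ 1/2` and `A ⊆ S` with
`h_S(A) ≥ 1/2` and `π(A)/π(S) ≤ Φ(G)`. -/
theorem stmt15 {G : Type*} [Fintype G] [DecidableEq G] [MeasurableSpace G] [MeasurableSingletonClass G]
    (P : Matrix G G ℝ) (pi : G → ℝ) (μ : G → Measure (ℕ → G))
    (hP : IsStochastic P) (hirr : IsIrreducible P) (hap : IsAperiodic P)
    (hrev : IsReversible P pi) (hμ : IsMarkovChain P μ)
    (hcard : 2 ≤ Fintype.card G) :
    beta pi μ ≤ Phi P pi ∧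
      ∃ S : Set G, S.Nonempty ∧ piOf pi S ≤ 1 / 2 ∧
        ∃ A ⊆ S, 1 / 2 ≤ ∑ x, A.indicator (harmStat pi μ S) x ∧
          piOf pi A / piOf pi S ≤ Phi P pi := by
  have : Nontrivial G := Fintype.one_lt_card_iff_nontrivial.1 hcard
  exact stmt15_general hP hirr hrev.1 hrev.2.1 hμ

end HM
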